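/- Let M ≥ 1 and let P be a real symmetric M×M matrix admitting an orthonormal eigenbasis u_1, …, u_M of ℝ^M with eigenvalues λ_1 = 1, λ_2, …, λ_M, where u_1 = (1/√M)·𝟙 (𝟙 the all-ones vector) and |λ_p| < 1 for all p ≥ 2. Then for every t ≥ 1, every sequence ζ(1), …, ζ(t) of vectors in {0,1}^M, and every coordinate m ∈ {1, …, M}: | ( Σ_{s=1}^t P^{t+1−s} ζ(s) )_m − (1/M)·Σ_{s=1}^t Σ_{i=1}^M ζ(s)_i | ≤ √M · Σ_{p=2}^M |λ_p| / (1 − |λ_p|). -/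

import Mathlib

open Finset

lemma rc_geom (r : ℝ) (h0 : 0 ≤ r) (h1 : r < 1) (t : ℕ) :
    ∑ s ∈ Finset.Icc 1 t, r ^ (t + 1 - s) ≤ r / (1 - r) := by
  have key : (∑ s ∈ Finset.Icc 1 t, r ^ (t + 1 - s)) * (1 - r) = r - r ^ (t + 1) := by
    induction t with
    | zero => simp
    | succ n ih =>
      rw [Finset.sum_Icc_succ_top (by omega)]
      have : ∑ s ∈ Finset.Icc 1 n, r ^ (n + 1 + 1 - s)
          = r * ∑ s ∈ Finset.Icc 1 n, r ^ (n + 1 - s) := by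
        rw [Finset.mul_sum]
        refine Finset.sum_congr rfl fun s hs => ?_
        rw [Finset.mem_Icc] at hs
        rw [← pow_succ']
        congr 1
        omega
      rw [this, add_mul, mul_assoc, ih, Nat.add_sub_cancel_left]
      ring
  rw [le_div_iff₀ (by linarith), key]
  have := pow_nonneg h0 (t + 1)
  linarith

/-- Running-consensus estimation error bound: if `P` is a real symmetric `M × M` matrix
with orthonormal eigenbasis `u_1, ..., u_M`, eigenvalues `λ_1 = 1, λ_2, ..., λ_M` with
`|λ_p| < 1` for `p ≥ 2`, and `u_1 = 𝟙/√M`, then for every `t ≥ 1`, every sequence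
`ζ(1), ..., ζ(t)` of `{0,1}`-vectors and every coordinate `m`, the running-consensus
estimate `(Σ_{s=1}^t P^{t+1-s} ζ(s))_m` deviates from the network average
`(1/M) Σ_{s=1}^t Σ_i ζ(s)_i` by at most `√M · Σ_{p≥2} |λ_p|/(1 - |λ_p|)`. -/
theorem running_consensus_error_bound
    (M : ℕ) (hM : 0 < M) (P : Matrix (Fin M) (Fin M) ℝ) (hsymm : P.IsSymm)
    (u : Fin M → (Fin M → ℝ)) (lam : Fin M → ℝ)
    (horth : ∀ p q, (∑ i, u p i * u q i) = if p = q then (1 : ℝ) else 0)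
    (heig : ∀ p, P.mulVec (u p) = lam p • u p)
    (hu0 : u ⟨0, hM⟩ = fun _ => 1 / Real.sqrt M)
    (hlam0 : lam ⟨0, hM⟩ = 1)
    (hlam : ∀ p, p ≠ (⟨0, hM⟩ : Fin M) → |lam p| < 1)
    (t : ℕ) (ht : 1 ≤ t)
    (ζ : ℕ → Fin M → ℝ) (hζ : ∀ s i, ζ s i = 0 ∨ ζ s i = 1)
    (m : Fin M) :
    |(∑ s ∈ Finset.Icc 1 t, (P ^ (t + 1 - s)).mulVec (ζ s)) m
        - (1 / (M : ℝ)) * ∑ s ∈ Finset.Icc 1 t, ∑ i, ζ s i|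
      ≤ Real.sqrt M * ∑ p ∈ Finset.univ.erase (⟨0, hM⟩ : Fin M), |lam p| / (1 - |lam p|) := by
  have hdual : ∀ i j, (∑ p, u p i * u p j) = if i = j then (1 : ℝ) else 0 := by
    have h1 : (Matrix.of u) * (Matrix.of u).transpose = 1 := by
      ext p q
      simp [Matrix.mul_apply, Matrix.one_apply, horth]
    have h2 := mul_eq_one_comm.mp h1
    intro i j
    have h3 := congrFun (congrFun h2 i) j
    simpa [Matrix.mul_apply, Matrix.one_apply] using h3
  have hpow : ∀ (n : ℕ) p, (P ^ n).mulVec (u p) = lam p ^ n • u p := by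
    intro n p
    induction n with
    | zero => simp
    | succ k ih =>
      rw [pow_succ, ← Matrix.mulVec_mulVec, heig, Matrix.mulVec_smul, ih, smul_smul, pow_succ']
  have hexp : ∀ v : Fin M → ℝ, v = ∑ p, (∑ j, u p j * v j) • u p := by
    intro v
    ext i
    simp only [Finset.sum_apply, Pi.smul_apply, smul_eq_mul, Finset.sum_mul]
    rw [Finset.sum_comm]
    have : ∀ j, ∑ p, u p j * v j * u p i = (if j = i then (1 : ℝ) else 0) * v j := by
      intro j
      rw [← hdual, Finset.sum_mul]
      exact Finset.sum_congr rfl fun p _ => by ring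
    simp [this]
  have hPv : ∀ (n : ℕ) (v : Fin M → ℝ),
      (P ^ n).mulVec v m = ∑ p, lam p ^ n * ((∑ j, u p j * v j) * u p m) := by
    intro n v
    conv_lhs => rw [hexp v]
    rw [Matrix.mulVec_sum, Finset.sum_apply]
    refine Finset.sum_congr rfl fun p _ => ?_
    rw [Matrix.mulVec_smul, hpow]
    simp only [Pi.smul_apply, smul_eq_mul]
    ring
  have hMR : (0 : ℝ) < M := by exact_mod_cast hM
  have hdiff : ∀ s n, (P ^ n).mulVec (ζ s) m - 1 / (M : ℝ) * ∑ i, ζ s i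
      = ∑ p ∈ Finset.univ.erase (⟨0, hM⟩ : Fin M),
          lam p ^ n * ((∑ j, u p j * ζ s j) * u p m) := by
    intro s n
    rw [hPv, ← Finset.add_sum_erase _ _ (Finset.mem_univ (⟨0, hM⟩ : Fin M)), hlam0, hu0,
      ← Finset.mul_sum]
    have : 1 / Real.sqrt M * (1 / Real.sqrt M) = 1 / (M : ℝ) := by
      rw [div_mul_div_comm, Real.mul_self_sqrt hMR.le, one_mul]
    rw [← this]
    ring
  have hum : ∀ p, |u p m| ≤ 1 := by
    intro p
    rw [← sq_le_one_iff_abs_le_one]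
    have h := horth p p
    rw [if_pos rfl] at h
    have := Finset.single_le_sum (f := fun i => u p i * u p i)
      (fun i _ => mul_self_nonneg _) (Finset.mem_univ m)
    simp only [h] at this
    nlinarith
  have hin : ∀ s p, |∑ j, u p j * ζ s j| ≤ Real.sqrt M := by
    intro s p
    apply Real.abs_le_sqrt
    have hcs := Finset.sum_mul_sq_le_sq_mul_sq Finset.univ (u p) (ζ s)
    have h := horth p p
    rw [if_pos rfl] at h
    have h1 : ∑ i, u p i ^ 2 = 1 := by
      rw [← h]
      exact Finset.sum_congr rfl fun i _ => by ring
    have h2 : ∑ i, ζ s i ^ 2 ≤ (M : ℝ) := by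
      calc ∑ i, ζ s i ^ 2 ≤ ∑ i : Fin M, (1 : ℝ) :=
            Finset.sum_le_sum fun i _ => by rcases hζ s i with h | h <;> simp [h]
        _ = M := by simp
    rw [h1, one_mul] at hcs
    exact hcs.trans h2
  rw [Finset.sum_apply, Finset.mul_sum, ← Finset.sum_sub_distrib]
  simp only [hdiff]
  rw [Finset.sum_comm, Finset.mul_sum]
  refine (Finset.abs_sum_le_sum_abs _ _).trans (Finset.sum_le_sum fun p hp => ?_)
  have hl := hlam p (Finset.ne_of_mem_erase hp)
  calc |∑ s ∈ Finset.Icc 1 t, lam p ^ (t + 1 - s) * ((∑ j, u p j * ζ s j) * u p m)|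
      ≤ ∑ s ∈ Finset.Icc 1 t, Real.sqrt M * |lam p| ^ (t + 1 - s) := by
        refine (Finset.abs_sum_le_sum_abs _ _).trans (Finset.sum_le_sum fun s _ => ?_)
        rw [abs_mul, abs_pow, abs_mul, mul_comm (Real.sqrt M)]
        refine mul_le_mul_of_nonneg_left ?_ (by positivity)
        calc _ ≤ Real.sqrt M * 1 :=
              mul_le_mul (hin s p) (hum p) (abs_nonneg _) (Real.sqrt_nonneg _)
          _ = _ := mul_one _
    _ = Real.sqrt M * ∑ s ∈ Finset.Icc 1 t, |lam p| ^ (t + 1 - s) := by rw [Finset.mul_sum]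
    _ ≤ _ := mul_le_mul_of_nonneg_left (rc_geom _ (abs_nonneg _) hl t) (Real.sqrt_nonneg _)
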